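/- Let F be an entire function with F^{(n)}(0) ≠ 0 for all n ≥ 0, let g be holomorphic in a neighborhood of 0, and let q_1,…,q_m be distinct complex numbers. Then there exists a unique tuple of complex coefficients (c_1,…,c_m) such that the function f(z) = Σ_{j=1}^m c_j F(q_j z) satisfies f^{(j)}(0) = g^{(j)}(0) for all 0 ≤ j ≤ m−1. -/

import Mathlib

open Finset

noncomputable section

/-!
The `j`-th derivative of `z ↦ ∑ i, c i * F (q i * z)` at `0` is the power sum `∑ i, c i * q i ^ j`
times the `j`-th derivative of `F` at `0`. When the latter is nonzero it can be divided out, so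
prescribing the first `m` derivatives is a linear system in `c` whose matrix is the Vandermonde
matrix of `q`.
-/

theorem existsUnique_sum_mul_pow_eq {K : Type*} [Field K] {n : ℕ} {v : Fin n → K}
    (hv : Function.Injective v) (b : Fin n → K) :
    ∃! c : Fin n → K, ∀ j : Fin n, ∑ i, c i * v i ^ (j : ℕ) = b j := by
  have hunit : IsUnit (Matrix.vandermonde v) :=
    (Matrix.isUnit_iff_isUnit_det _).2 (Matrix.det_vandermonde_ne_zero_iff.2 hv).isUnit
  have hbij : Function.Bijective (Matrix.vandermonde v).vecMul :=
    ⟨Matrix.vecMul_injective_iff_isUnit.2 hunit, Matrix.vecMul_surjective_iff_isUnit.2 hunit⟩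
  simpa only [funext_iff, Matrix.vecMul, dotProduct, Matrix.vandermonde_apply]
    using hbij.existsUnique b

section IteratedDeriv

variable {𝕜 : Type*} [NontriviallyNormedField 𝕜]

theorem iteratedDeriv_comp_mul_left {E : Type*} [NormedAddCommGroup E] [NormedSpace 𝕜 E]
    (n : ℕ) (a : 𝕜) (f : 𝕜 → E) (x : 𝕜) :
    iteratedDeriv n (fun z => f (a * z)) x = a ^ n • iteratedDeriv n f (a * x) := by
  induction n generalizing f x with
  | zero => simp only [iteratedDeriv_zero, pow_zero, one_smul]
  | succ n ih =>
    have hderiv : deriv (fun z => f (a * z)) = fun z => a • deriv f (a * z) :=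
      funext (deriv_comp_mul_left a f)
    rw [iteratedDeriv_succ', hderiv, ih (fun z => a • deriv f z),
      iteratedDeriv_fun_const_smul_field, smul_smul, ← pow_succ, iteratedDeriv_succ']

variable {𝕜' : Type*} [NormedField 𝕜'] [NormedAlgebra 𝕜 𝕜']

theorem iteratedDeriv_sum_mul_comp_mul_left {ι : Type*} {s : Finset ι} {n : ℕ} {F : 𝕜 → 𝕜'}
    {q : ι → 𝕜} {x : 𝕜} (hF : ∀ i ∈ s, ContDiffAt 𝕜 n F (q i * x)) (c : ι → 𝕜') :
    iteratedDeriv n (fun z => ∑ i ∈ s, c i * F (q i * z)) x =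
      ∑ i ∈ s, c i * q i ^ n • iteratedDeriv n F (q i * x) := by
  have hterm : ∀ i ∈ s, ContDiffAt 𝕜 n (fun z => c i * F (q i * z)) x := fun i hi =>
    contDiffAt_const.mul ((hF i hi).comp x (contDiffAt_const.mul contDiffAt_id))
  simp only [iteratedDeriv_fun_sum hterm, iteratedDeriv_const_mul_field,
    iteratedDeriv_comp_mul_left]

theorem stmt2_general {m : ℕ} {F : 𝕜 → 𝕜'} (hF : ∀ j : Fin m, ContDiffAt 𝕜 (j : ℕ) F 0)
    (hFn : ∀ j : Fin m, iteratedDeriv j F 0 ≠ 0) {q : Fin m → 𝕜} (hq : Function.Injective q)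
    (b : Fin m → 𝕜') :
    ∃! c : Fin m → 𝕜',
      ∀ j : Fin m, iteratedDeriv j (fun z => ∑ i, c i * F (q i * z)) 0 = b j := by
  have hderiv (c : Fin m → 𝕜') (j : Fin m) :
      iteratedDeriv j (fun z => ∑ i, c i * F (q i * z)) 0 =
        (∑ i, c i * algebraMap 𝕜 𝕜' (q i) ^ (j : ℕ)) * iteratedDeriv j F 0 := by
    rw [iteratedDeriv_sum_mul_comp_mul_left fun i _ => by simpa only [mul_zero] using hF j]
    simp only [mul_zero, Algebra.smul_def, map_pow, ← mul_assoc, sum_mul]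
  simpa only [hderiv, ← eq_div_iff (hFn _), Function.comp_apply] using
    existsUnique_sum_mul_pow_eq ((algebraMap 𝕜 𝕜').injective.comp hq)
      fun j => b j / iteratedDeriv j F 0

end IteratedDeriv

/-- If `F` is entire with `F^(n)(0) ≠ 0` for all `n`, `g` is holomorphic near `0`, and
`q_1,…,q_m` are distinct, then there is a unique tuple of coefficients `c` such that the
`F`-polynomial `z ↦ ∑ c j • F (q j z)` interpolates `g` to order `m` at `0`. -/
theorem stmt2 (F : ℂ → ℂ) (hF : Differentiable ℂ F)
    (hFn : ∀ n : ℕ, iteratedDeriv n F 0 ≠ 0)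
    (g : ℂ → ℂ) (hg : AnalyticAt ℂ g 0)
    {m : ℕ} (q : Fin m → ℂ) (hq : Function.Injective q) :
    ∃! c : Fin m → ℂ,
      ∀ j < m, iteratedDeriv j (fun z => ∑ i, c i * F (q i * z)) 0 = iteratedDeriv j g 0 := by
  simpa only [Fin.forall_iff] using
    stmt2_general (fun _ => hF.contDiff.contDiffAt) (fun j => hFn j) hq fun j => iteratedDeriv j g 0
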